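/- Let α₁, β₁, α₂, β₂ > 0, λ ∈ ℝ, and let s > 0 be a real number. Then ∫₀^∞ e^{−st} · (∑_{k=0}^∞ k · λ^k · t^{α₁k+β₁−1} · (ln t − ψ(α₁k+β₁)) / (Γ(α₁k+β₁) · Γ(α₂k+β₂))) dt = − (ln s / s^{β₁}) · ∑_{k=0}^∞ k · (λ · s^{−α₁})^k / Γ(α₂k+β₂). (The integrand series is the term-by-term derivative with respect to α₁ of t^{β₁−1} E_{(α₁,β₁),(α₂,β₂)}(λ t^{α₁}).) -/

import Mathlib

open Real MeasureTheory

/-- The digamma function `ψ(x) = the logarithmic derivative of Γ`, i.e. the derivative of `log ∘ Γ`. -/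
noncomputable def digamma (x : ℝ) : ℝ := deriv (fun y : ℝ => Real.log (Real.Gamma y)) x

/-!
For `x > 0` the function `t ^ (x - 1) / Γ x` has Laplace transform `s ^ (-x)`. Differentiating in
`x`, the function `t ^ (x - 1) * (log t - ψ x) / Γ x` has Laplace transform `-log s * s ^ (-x)`.
Taking `x = α₁ k + β₁` and summing over `k` with weights `k * lam ^ k / Γ (α₂ k + β₂)` gives the
identity. The interchange of sum and integral needs an `L¹` bound. The signed integral is known
exactly and `log t - ψ x ≤ t + 2 / x`, so the `L¹` norm is `O((x + 1 / x) * s ^ (-x))`, while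
`1 / Γ (α₂ k + β₂)` decays faster than any geometric sequence.
-/

open Set Filter Asymptotics Topology

section Digamma

variable {x : ℝ}

theorem hasDerivAt_Gamma_digamma (hx : 0 < x) : HasDerivAt Gamma (digamma x * Gamma x) x := by
  have hd : DifferentiableAt ℝ Gamma x :=
    differentiableOn_Gamma_Ioi.differentiableAt (Ioi_mem_nhds hx)
  have hΓ : Gamma x ≠ 0 := (Gamma_pos_of_pos hx).ne'
  rw [digamma, deriv.log hd hΓ, div_mul_cancel₀ _ hΓ]
  exact hd.hasDerivAt

-- Convexity of `log ∘ Γ` on `[x, x + 1]`, where its slope is `log x`.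
theorem log_le_digamma_add_one (hx : 0 < x) : log x ≤ digamma (x + 1) := by
  have hx1 : 0 < x + 1 := by linarith
  have hd : DifferentiableAt ℝ (log ∘ Gamma) (x + 1) :=
    (hasDerivAt_Gamma_digamma hx1).differentiableAt.log (Gamma_pos_of_pos hx1).ne'
  have hslope : slope (log ∘ Gamma) x (x + 1) ≤ digamma (x + 1) :=
    convexOn_log_Gamma.slope_le_deriv hx hx1 (lt_add_one x) hd
  have hlog : log (Gamma (x + 1)) = log x + log (Gamma x) := by
    rw [Gamma_add_one hx.ne', log_mul hx.ne' (Gamma_pos_of_pos hx).ne']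
  simpa [slope_def_field, hlog] using hslope

theorem digamma_add_one (hx : 0 < x) : digamma (x + 1) = digamma x + x⁻¹ := by
  have hx1 : 0 < x + 1 := by linarith
  have hprod : HasDerivAt (fun y : ℝ => y * Gamma y)
      (1 * Gamma x + x * (digamma x * Gamma x)) x :=
    (hasDerivAt_id x).mul (hasDerivAt_Gamma_digamma hx)
  have hshift : HasDerivAt (fun y : ℝ => y * Gamma y) (digamma (x + 1) * Gamma (x + 1)) x := by
    refine ((hasDerivAt_Gamma_digamma hx1).comp_add_const x 1).congr_of_eventuallyEq ?_
    filter_upwards [lt_mem_nhds hx] with y hy using (Gamma_add_one hy.ne').symm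
  have h := hshift.unique hprod
  rw [Gamma_add_one hx.ne'] at h
  field_simp at h ⊢
  linarith

theorem neg_digamma_le_two_mul_inv (hx : 0 < x) : -digamma x ≤ 2 * x⁻¹ := by
  have hlog : 1 - x⁻¹ ≤ log x := one_sub_inv_le_log_of_pos hx
  linarith [log_le_digamma_add_one hx, digamma_add_one hx]

end Digamma

section RealMellin

theorem mellin_ofReal (f : ℝ → ℝ) (x : ℝ) :
    mellin (fun t => (f t : ℂ)) x = ((∫ t in Ioi (0 : ℝ), t ^ (x - 1) * f t : ℝ) : ℂ) := by
  rw [mellin, ← integral_complex_ofReal]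
  refine setIntegral_congr_fun measurableSet_Ioi fun t (ht : 0 < t) => ?_
  push_cast [Complex.ofReal_cpow ht.le]
  rfl

theorem mellinConvergent_ofReal_iff {f : ℝ → ℝ} {x : ℝ} :
    MellinConvergent (fun t => (f t : ℂ)) x ↔
      IntegrableOn (fun t => t ^ (x - 1) * f t) (Ioi 0) := by
  have hcongr : EqOn (fun t : ℝ => (t : ℂ) ^ ((x : ℂ) - 1) • (f t : ℂ))
      (fun t => ((t ^ (x - 1) * f t : ℝ) : ℂ)) (Ioi 0) := fun t (ht : 0 < t) => by
    push_cast [Complex.ofReal_cpow ht.le]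
    rfl
  rw [MellinConvergent, integrableOn_congr_fun hcongr measurableSet_Ioi]
  exact ⟨fun h => h.re, fun h => h.ofReal⟩

theorem integrableOn_and_hasDerivAt_integral_rpow_mul {a b x : ℝ} {f : ℝ → ℝ}
    (hf : LocallyIntegrableOn f (Ioi 0)) (hf_top : f =O[atTop] (· ^ (-a))) (hxa : x < a)
    (hf_bot : f =O[𝓝[>] 0] (· ^ (-b))) (hbx : b < x) :
    IntegrableOn (fun t => t ^ (x - 1) * (log t * f t)) (Ioi 0) ∧
      HasDerivAt (fun y => ∫ t in Ioi (0 : ℝ), t ^ (y - 1) * f t)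
        (∫ t in Ioi (0 : ℝ), t ^ (x - 1) * (log t * f t)) x := by
  have hlog : (fun t => log t • (f t : ℂ)) = fun t => ((log t * f t : ℝ) : ℂ) := by
    ext t
    simp
  have hmellin := mellin_hasDerivAt_of_isBigO_rpow (f := fun t => (f t : ℂ)) (s := x)
    (fun t ht => (hf t ht).imp fun _ h => ⟨h.1, h.2.ofReal⟩)
    (Complex.isBigO_ofReal_left.mpr hf_top) hxa (Complex.isBigO_ofReal_left.mpr hf_bot) hbx
  rw [hlog, mellinConvergent_ofReal_iff] at hmellin
  refine ⟨hmellin.1, ?_⟩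
  simpa only [mellin_ofReal, Complex.ofReal_re] using hmellin.2.real_of_complex

end RealMellin

section Laplace

variable {x s : ℝ}

theorem integrableOn_exp_neg_mul_mul_rpow (hx : 0 < x) (hs : 0 < s) :
    IntegrableOn (fun t => exp (-(s * t)) * t ^ (x - 1)) (Ioi 0) := by
  simpa [mul_comm] using
    integrableOn_rpow_mul_exp_neg_mul_rpow (by linarith : -1 < x - 1) one_pos hs

theorem integral_exp_neg_mul_mul_rpow (hx : 0 < x) (hs : 0 < s) :
    ∫ t in Ioi (0 : ℝ), exp (-(s * t)) * t ^ (x - 1) = s ^ (-x) * Gamma x := by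
  simp_rw [mul_comm (exp _)]
  rw [integral_rpow_mul_exp_neg_mul_Ioi hx hs, one_div, inv_rpow hs.le, rpow_neg hs.le]

theorem integrableOn_and_hasDerivAt_integral_exp_neg_mul_mul_rpow (hx : 0 < x) (hs : 0 < s) :
    IntegrableOn (fun t => exp (-(s * t)) * (t ^ (x - 1) * log t)) (Ioi 0) ∧
      HasDerivAt (fun y => ∫ t in Ioi (0 : ℝ), exp (-(s * t)) * t ^ (y - 1))
        (∫ t in Ioi (0 : ℝ), exp (-(s * t)) * (t ^ (x - 1) * log t)) x := by
  have hcont : Continuous fun t => exp (-(s * t)) := by fun_prop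
  have htop : (fun t => exp (-(s * t))) =O[atTop] (· ^ (-(x + 1))) := by
    simpa only [neg_mul] using (isLittleO_exp_neg_mul_rpow_atTop hs (-(x + 1))).isBigO
  have hbot : (fun t => exp (-(s * t))) =O[𝓝[>] 0] (· ^ (-0 : ℝ)) := by
    simpa using (hcont.tendsto 0).mono_left nhdsWithin_le_nhds |>.isBigO_one ℝ
  have hmellin := integrableOn_and_hasDerivAt_integral_rpow_mul
    (hcont.locallyIntegrable.locallyIntegrableOn _) htop (lt_add_one x) hbot hx
  simpa only [mul_comm, mul_left_comm] using hmellin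

theorem integral_exp_neg_mul_mul_rpow_mul_log (hx : 0 < x) (hs : 0 < s) :
    ∫ t in Ioi (0 : ℝ), exp (-(s * t)) * (t ^ (x - 1) * log t) =
      s ^ (-x) * Gamma x * (digamma x - log s) := by
  have hpow : HasDerivAt (fun y => s ^ (-y)) (log s * -1 * s ^ (-x)) x :=
    (hasDerivAt_neg x).const_rpow hs
  have hclosed : HasDerivAt (fun y => ∫ t in Ioi (0 : ℝ), exp (-(s * t)) * t ^ (y - 1))
      (log s * -1 * s ^ (-x) * Gamma x + s ^ (-x) * (digamma x * Gamma x)) x := by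
    refine (hpow.mul (hasDerivAt_Gamma_digamma hx)).congr_of_eventuallyEq ?_
    filter_upwards [lt_mem_nhds hx] with y hy using integral_exp_neg_mul_mul_rpow hy hs
  rw [(integrableOn_and_hasDerivAt_integral_exp_neg_mul_mul_rpow hx hs).2.unique hclosed]
  ring

theorem integrableOn_exp_neg_mul_mul_rpow_mul_log_sub (hx : 0 < x) (hs : 0 < s) (p : ℝ) :
    IntegrableOn (fun t => exp (-(s * t)) * (t ^ (x - 1) * (log t - p))) (Ioi 0) := by
  refine ((integrableOn_and_hasDerivAt_integral_exp_neg_mul_mul_rpow hx hs).1.sub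
    ((integrableOn_exp_neg_mul_mul_rpow hx hs).mul_const p)).congr_fun (fun t _ => ?_)
    measurableSet_Ioi
  simp only [Pi.sub_apply]
  ring

theorem integral_exp_neg_mul_mul_rpow_mul_log_sub (hx : 0 < x) (hs : 0 < s) (p : ℝ) :
    ∫ t in Ioi (0 : ℝ), exp (-(s * t)) * (t ^ (x - 1) * (log t - p)) =
      s ^ (-x) * Gamma x * (digamma x - log s - p) := by
  have hexpand : ∀ t, exp (-(s * t)) * (t ^ (x - 1) * (log t - p)) =
      exp (-(s * t)) * (t ^ (x - 1) * log t) - exp (-(s * t)) * t ^ (x - 1) * p :=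
    fun t => by ring
  simp_rw [hexpand]
  rw [integral_sub (integrableOn_and_hasDerivAt_integral_exp_neg_mul_mul_rpow hx hs).1
    ((integrableOn_exp_neg_mul_mul_rpow hx hs).mul_const p), integral_mul_const,
    integral_exp_neg_mul_mul_rpow_mul_log hx hs, integral_exp_neg_mul_mul_rpow hx hs]
  ring

theorem one_le_add_inv (hx : 0 < x) : 1 ≤ x + x⁻¹ := by
  rcases le_total 1 x with h | h
  · linarith [inv_pos.mpr hx]
  · linarith [(one_le_inv₀ hx).mpr h]

-- `|a| ≤ 2 * b - a` as soon as `a ≤ b` and `0 ≤ b`; the right-hand side can be integrated exactly.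
theorem abs_log_sub_digamma_le (hx : 0 < x) {t : ℝ} (ht : 0 < t) :
    |log t - digamma x| ≤ 2 * (t + 2 * x⁻¹) - (log t - digamma x) := by
  have hlog : log t ≤ t := by linarith [log_le_sub_one_of_pos ht]
  have hpos : 0 < t + 2 * x⁻¹ := by positivity
  rw [abs_le]
  constructor <;> linarith [neg_digamma_le_two_mul_inv hx]

theorem integral_norm_exp_neg_mul_mul_rpow_mul_log_sub_digamma_le (hx : 0 < x) (hs : 0 < s) :
    ∫ t in Ioi (0 : ℝ), ‖exp (-(s * t)) * (t ^ (x - 1) * (log t - digamma x))‖ ≤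
      (2 / s + 4 + |log s|) * (x + x⁻¹) * (s ^ (-x) * Gamma x) := by
  have hx1 : 0 < x + 1 := by linarith
  have hmean := (integrableOn_exp_neg_mul_mul_rpow hx1 hs).const_mul 2
  have hmass := (integrableOn_exp_neg_mul_mul_rpow hx hs).const_mul (4 * x⁻¹)
  have hkernel := integrableOn_exp_neg_mul_mul_rpow_mul_log_sub hx hs (digamma x)
  calc ∫ t in Ioi (0 : ℝ), ‖exp (-(s * t)) * (t ^ (x - 1) * (log t - digamma x))‖
    _ ≤ ∫ t in Ioi (0 : ℝ), (2 * (exp (-(s * t)) * t ^ (x + 1 - 1)) +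
          4 * x⁻¹ * (exp (-(s * t)) * t ^ (x - 1)) -
          exp (-(s * t)) * (t ^ (x - 1) * (log t - digamma x))) := by
      refine setIntegral_mono_on hkernel.norm ((hmean.add hmass).sub hkernel) measurableSet_Ioi
        fun t (ht : 0 < t) => ?_
      have hweight : 0 ≤ exp (-(s * t)) * t ^ (x - 1) := by positivity
      have hshift : t ^ (x + 1 - 1) = t ^ (x - 1) * t := by
        rw [add_sub_right_comm, rpow_add_one ht.ne']
      rw [← mul_assoc, norm_mul, norm_of_nonneg hweight, norm_eq_abs, hshift]
      linarith [mul_le_mul_of_nonneg_left (abs_log_sub_digamma_le hx ht) hweight]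
    _ = 2 * (s ^ (-(x + 1)) * Gamma (x + 1)) + 4 * x⁻¹ * (s ^ (-x) * Gamma x) -
          s ^ (-x) * Gamma x * (digamma x - log s - digamma x) := by
      rw [integral_sub (by exact hmean.add hmass) hkernel, integral_add hmean hmass,
        integral_const_mul, integral_const_mul, integral_exp_neg_mul_mul_rpow hx1 hs,
        integral_exp_neg_mul_mul_rpow hx hs, integral_exp_neg_mul_mul_rpow_mul_log_sub hx hs]
    _ = (2 / s * x + 4 * x⁻¹ + log s) * (s ^ (-x) * Gamma x) := by
      rw [Gamma_add_one hx.ne', neg_add, rpow_add hs, rpow_neg_one]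
      ring
    _ ≤ (2 / s + 4 + |log s|) * (x + x⁻¹) * (s ^ (-x) * Gamma x) := by
      gcongr
      have hinv : 0 ≤ 2 / s * x⁻¹ := by positivity
      have hlog : log s ≤ |log s| * (x + x⁻¹) :=
        (le_abs_self _).trans (le_mul_of_one_le_right (abs_nonneg _) (one_le_add_inv hx))
      linarith

theorem integrableOn_exp_neg_mul_mul_rpow_mul_log_sub_digamma_div_Gamma (hx : 0 < x)
    (hs : 0 < s) :
    IntegrableOn (fun t => exp (-(s * t)) * (t ^ (x - 1) * (log t - digamma x) / Gamma x))
      (Ioi 0) := by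
  simpa only [IntegrableOn, mul_div_assoc] using
    (integrableOn_exp_neg_mul_mul_rpow_mul_log_sub hx hs (digamma x)).div_const (Gamma x)

theorem integral_exp_neg_mul_mul_rpow_mul_log_sub_digamma_div_Gamma (hx : 0 < x) (hs : 0 < s) :
    ∫ t in Ioi (0 : ℝ), exp (-(s * t)) * (t ^ (x - 1) * (log t - digamma x) / Gamma x) =
      -(log s * s ^ (-x)) := by
  have hΓ : Gamma x ≠ 0 := (Gamma_pos_of_pos hx).ne'
  simp_rw [← mul_div_assoc]
  rw [integral_div, integral_exp_neg_mul_mul_rpow_mul_log_sub hx hs]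
  field_simp
  ring

theorem integral_norm_exp_neg_mul_mul_rpow_mul_log_sub_digamma_div_Gamma_le (hx : 0 < x)
    (hs : 0 < s) :
    ∫ t in Ioi (0 : ℝ), ‖exp (-(s * t)) * (t ^ (x - 1) * (log t - digamma x) / Gamma x)‖ ≤
      (2 / s + 4 + |log s|) * (s ^ (-x) * (x + x⁻¹)) := by
  have hΓ : 0 < Gamma x := Gamma_pos_of_pos hx
  simp_rw [← mul_div_assoc, norm_div]
  rw [integral_div, norm_of_nonneg hΓ.le, div_le_iff₀ hΓ]
  linarith [integral_norm_exp_neg_mul_mul_rpow_mul_log_sub_digamma_le hx hs]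

end Laplace

section TermwiseLaplace

variable {ι : Type*} [Countable ι] {c x : ι → ℝ} {s : ℝ}

theorem integral_exp_neg_mul_tsum_rpow_mul_log_sub_digamma (hx : ∀ i, 0 < x i) (hs : 0 < s)
    (hc : Summable fun i => c i * s ^ (-x i) * (x i + (x i)⁻¹)) :
    ∫ t in Ioi (0 : ℝ), exp (-(s * t)) *
        ∑' i, c i * (t ^ (x i - 1) * (log t - digamma (x i)) / Gamma (x i)) =
      -(log s * ∑' i, c i * s ^ (-x i)) := by
  set F : ι → ℝ → ℝ := fun i t => c i *
    (exp (-(s * t)) * (t ^ (x i - 1) * (log t - digamma (x i)) / Gamma (x i))) with hF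
  have hF_int : ∀ i, IntegrableOn (F i) (Ioi 0) := fun i =>
    (integrableOn_exp_neg_mul_mul_rpow_mul_log_sub_digamma_div_Gamma (hx i) hs).const_mul _
  have hF_norm : ∀ i, ∫ t in Ioi (0 : ℝ), ‖F i t‖ ≤
      (2 / s + 4 + |log s|) * ‖c i * s ^ (-x i) * (x i + (x i)⁻¹)‖ := fun i => by
    have hx0 : 0 < x i := hx i
    have hweight : 0 ≤ s ^ (-x i) * (x i + (x i)⁻¹) := by positivity
    simp only [hF, norm_mul (c i), integral_const_mul, mul_assoc (c i)]
    rw [norm_of_nonneg hweight, mul_left_comm]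
    gcongr
    exact integral_norm_exp_neg_mul_mul_rpow_mul_log_sub_digamma_div_Gamma_le hx0 hs
  have hF_sum : Summable fun i => ∫ t in Ioi (0 : ℝ), ‖F i t‖ :=
    .of_nonneg_of_le (fun i => integral_nonneg fun t => norm_nonneg _) hF_norm
      (hc.norm.mul_left _)
  calc ∫ t in Ioi (0 : ℝ), exp (-(s * t)) *
        ∑' i, c i * (t ^ (x i - 1) * (log t - digamma (x i)) / Gamma (x i))
    _ = ∫ t in Ioi (0 : ℝ), ∑' i, F i t := by
      simp_rw [← tsum_mul_left, hF, mul_left_comm]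
    _ = ∑' i, ∫ t in Ioi (0 : ℝ), F i t :=
      (integral_tsum_of_summable_integral_norm hF_int hF_sum).symm
    _ = -(log s * ∑' i, c i * s ^ (-x i)) := by
      simp_rw [hF, integral_const_mul,
        integral_exp_neg_mul_mul_rpow_mul_log_sub_digamma_div_Gamma (hx _) hs]
      rw [← tsum_mul_left, ← tsum_neg]
      exact tsum_congr fun i => by ring

end TermwiseLaplace

section Coefficients

theorem inv_Gamma_le_exp_mul_rpow {R y : ℝ} (hR : 0 < R) (hy : 1 ≤ y) :
    (Gamma y)⁻¹ ≤ exp R * R ^ (1 - y) := by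
  have hint := GammaIntegral_convergent (zero_lt_one.trans_le hy)
  have hsub : Ioi R ⊆ Ioi 0 := Ioi_subset_Ioi hR.le
  have hlower : exp (-R) * R ^ (y - 1) ≤ Gamma y := by
    rw [Gamma_eq_integral (zero_lt_one.trans_le hy)]
    calc exp (-R) * R ^ (y - 1) = ∫ u in Ioi R, exp (-u) * R ^ (y - 1) := by
          rw [integral_mul_const, integral_exp_neg_Ioi]
      _ ≤ ∫ u in Ioi R, exp (-u) * u ^ (y - 1) := by
          refine setIntegral_mono_on ((integrableOn_exp_neg_Ioi R).mul_const _)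
            (hint.mono_set hsub) measurableSet_Ioi fun u (hu : R < u) => ?_
          gcongr
      _ ≤ ∫ u in Ioi 0, exp (-u) * u ^ (y - 1) := by
          refine setIntegral_mono_set hint ?_ hsub.eventuallyLE
          filter_upwards [ae_restrict_mem measurableSet_Ioi] with u (hu : 0 < u)
          exact (by positivity : 0 ≤ exp (-u) * u ^ (y - 1))
  calc (Gamma y)⁻¹ ≤ (exp (-R) * R ^ (y - 1))⁻¹ := by gcongr
    _ = exp R * R ^ (1 - y) := by
      rw [mul_inv, ← exp_neg, neg_neg, ← rpow_neg hR.le, neg_sub]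

theorem summable_pow_mul_pow_div_Gamma {α : ℝ} (hα : 0 < α) (β r : ℝ) (m : ℕ) :
    Summable fun k : ℕ => (k : ℝ) ^ m * r ^ k / Gamma (α * k + β) := by
  set R : ℝ := (|r| + 1) ^ α⁻¹ with hR_def
  have hR : 0 < R := by positivity
  have hRα : R ^ (-α) = (|r| + 1)⁻¹ := by
    rw [hR_def, ← rpow_mul (by positivity), inv_mul_eq_div, neg_div, div_self hα.ne', rpow_neg_one]
  have hratio : ‖|r| / (|r| + 1)‖ < 1 := by
    rw [norm_of_nonneg (by positivity), div_lt_one (by positivity)]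
    exact lt_add_one _
  have harg : Tendsto (fun k : ℕ => α * (k : ℝ) + β) atTop atTop :=
    tendsto_atTop_add_const_right _ _ (tendsto_natCast_atTop_atTop.const_mul_atTop hα)
  refine .of_norm_bounded_eventually_nat
    ((summable_pow_mul_geometric_of_norm_lt_one m hratio).mul_left (exp R * R ^ (1 - β))) ?_
  filter_upwards [harg.eventually_ge_atTop 1] with k hk
  have hΓ : 0 < Gamma (α * k + β) := Gamma_pos_of_pos (by linarith)
  calc ‖(k : ℝ) ^ m * r ^ k / Gamma (α * k + β)‖
    _ = (k : ℝ) ^ m * |r| ^ k * (Gamma (α * k + β))⁻¹ := by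
      simp [abs_of_pos hΓ, div_eq_mul_inv]
    _ ≤ (k : ℝ) ^ m * |r| ^ k * (exp R * R ^ (1 - (α * k + β))) := by
      gcongr
      exact inv_Gamma_le_exp_mul_rpow hR hk
    _ = exp R * R ^ (1 - β) * ((k : ℝ) ^ m * (|r| / (|r| + 1)) ^ k) := by
      rw [show 1 - (α * k + β) = 1 - β + -α * k by ring, rpow_add hR, rpow_mul hR.le, hRα,
        rpow_natCast, div_eq_mul_inv, mul_pow]
      ring

theorem summable_mul_pow_div_Gamma_mul_add_inv {α₁ β₁ α₂ : ℝ} (hα₁ : 0 ≤ α₁) (hβ₁ : 0 < β₁)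
    (hα₂ : 0 < α₂) (β₂ r : ℝ) :
    Summable fun k : ℕ => k * r ^ k / Gamma (α₂ * k + β₂) *
      (α₁ * k + β₁ + (α₁ * k + β₁)⁻¹) := by
  have hlinear := (summable_pow_mul_pow_div_Gamma hα₂ β₂ r 1).norm.mul_left (β₁ + β₁⁻¹)
  have hquadratic := (summable_pow_mul_pow_div_Gamma hα₂ β₂ r 2).norm.mul_left α₁
  refine .of_norm_bounded (hlinear.add hquadratic) fun k => ?_
  have hk : 0 ≤ α₁ * k := by positivity
  have hinv : (α₁ * k + β₁)⁻¹ ≤ β₁⁻¹ := inv_anti₀ hβ₁ (le_add_of_nonneg_left hk)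
  calc ‖k * r ^ k / Gamma (α₂ * k + β₂) * (α₁ * k + β₁ + (α₁ * k + β₁)⁻¹)‖
    _ = ‖k * r ^ k / Gamma (α₂ * k + β₂)‖ * (α₁ * k + β₁ + (α₁ * k + β₁)⁻¹) := by
      rw [norm_mul, norm_of_nonneg (by positivity : 0 ≤ α₁ * k + β₁ + (α₁ * k + β₁)⁻¹)]
    _ ≤ ‖k * r ^ k / Gamma (α₂ * k + β₂)‖ * (α₁ * k + β₁ + β₁⁻¹) := by gcongr
    _ = (β₁ + β₁⁻¹) * ‖(k : ℝ) ^ 1 * r ^ k / Gamma (α₂ * k + β₂)‖ +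
          α₁ * ‖(k : ℝ) ^ 2 * r ^ k / Gamma (α₂ * k + β₂)‖ := by
      simp only [norm_mul, norm_div, norm_pow, norm_natCast]
      ring

end Coefficients

theorem rpow_neg_mul_natCast_add {s : ℝ} (hs : 0 < s) (α β : ℝ) (k : ℕ) :
    s ^ (-(α * k + β)) = (s ^ (-α)) ^ k * s ^ (-β) := by
  rw [neg_add, ← neg_mul, rpow_add hs, rpow_mul hs.le, rpow_natCast]

-- At a pole of `Γ` Lean's `Γ` is `0`, so division by it gives the value `0` of the entire function
-- `1 / Γ`.
theorem laplace_deriv_alpha1_4ML_general (α₁ β₁ α₂ β₂ lam s : ℝ) (hα₁ : 0 ≤ α₁) (hβ₁ : 0 < β₁)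
    (hα₂ : 0 < α₂) (hs : 0 < s) :
    (∫ t in Set.Ioi (0 : ℝ), Real.exp (-(s * t)) *
        ∑' k : ℕ, (k : ℝ) * lam ^ k * t ^ (α₁ * k + β₁ - 1) *
          (Real.log t - digamma (α₁ * k + β₁)) /
            (Real.Gamma (α₁ * k + β₁) * Real.Gamma (α₂ * k + β₂)))
      = -((Real.log s / s ^ β₁) *
          ∑' k : ℕ, (k : ℝ) * (lam * s ^ (-α₁)) ^ k / Real.Gamma (α₂ * k + β₂)) := by
  set r := lam * s ^ (-α₁) with hr
  set c : ℕ → ℝ := fun k => k * lam ^ k / Gamma (α₂ * k + β₂) with hc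
  have hx : ∀ k : ℕ, 0 < α₁ * k + β₁ := fun k => by positivity
  have hcs : ∀ k : ℕ, c k * s ^ (-(α₁ * k + β₁)) =
      s ^ (-β₁) * (k * r ^ k / Gamma (α₂ * k + β₂)) := fun k => by
    rw [rpow_neg_mul_natCast_add hs, hc, hr, mul_pow]
    ring
  have hsum : Summable fun k : ℕ =>
      c k * s ^ (-(α₁ * k + β₁)) * (α₁ * k + β₁ + (α₁ * k + β₁)⁻¹) := by
    simp_rw [hcs, mul_assoc (s ^ (-β₁))]
    exact (summable_mul_pow_div_Gamma_mul_add_inv hα₁ hβ₁ hα₂ β₂ r).mul_left _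
  have hlaplace := integral_exp_neg_mul_tsum_rpow_mul_log_sub_digamma hx hs hsum
  have hterm : ∀ (k : ℕ) (t : ℝ), k * lam ^ k * t ^ (α₁ * k + β₁ - 1) *
        (log t - digamma (α₁ * k + β₁)) / (Gamma (α₁ * k + β₁) * Gamma (α₂ * k + β₂)) =
      c k * (t ^ (α₁ * k + β₁ - 1) * (log t - digamma (α₁ * k + β₁)) / Gamma (α₁ * k + β₁)) :=
    fun k t => by rw [hc]; ring
  simp_rw [hterm, hlaplace, hcs, tsum_mul_left]
  rw [div_eq_mul_inv, ← rpow_neg hs.le, mul_assoc]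

theorem laplace_deriv_alpha1_4ML (α₁ β₁ α₂ β₂ lam s : ℝ) (hα₁ : 0 < α₁) (hβ₁ : 0 < β₁)
    (hα₂ : 0 < α₂) (hβ₂ : 0 < β₂) (hs : 0 < s) :
    (∫ t in Set.Ioi (0 : ℝ), Real.exp (-(s * t)) *
        ∑' k : ℕ, (k : ℝ) * lam ^ k * t ^ (α₁ * k + β₁ - 1) *
          (Real.log t - digamma (α₁ * k + β₁)) /
            (Real.Gamma (α₁ * k + β₁) * Real.Gamma (α₂ * k + β₂)))
      = -((Real.log s / s ^ β₁) *
          ∑' k : ℕ, (k : ℝ) * (lam * s ^ (-α₁)) ^ k / Real.Gamma (α₂ * k + β₂)) :=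
  laplace_deriv_alpha1_4ML_general α₁ β₁ α₂ β₂ lam s hα₁.le hβ₁ hα₂ hs
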